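/- arXiv:cs/0106008 — 2 statements merged into one kernel-verified Lean document; each statement's English description precedes it below -/
import Mathlib

section
/- Let L be a finite complete lattice and τ : ι → L → L a family of operators (ι a finite nonempty type) such that every τ i is monotone and deflationary. Then for every index sequence t, the eventual value of any fair trace from b is less than or equal to the eventual value of the trace from b along t. Consequently, the greatest lower bound of the eventual values of the traces from b over all index sequences is itself the eventual value of a trace from b (namely of any fair trace). -/
/-!
The limit of a fair trace is fixed by every operator, since each operator is applied after the
trace has become constant, and it lies below the starting element because the operators are
deflationary. Any common fixed point below the starting element stays below every trace, as
monotone operators preserve the inequality at each step.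
-/

open Filter Function

section Trace

variable {ι α : Type*}

/-- The sequence `x` is a trace along the index sequence `t`, with no condition on its starting
element `x 0`. -/
def IsTrace (τ : ι → α → α) (t : ℕ → ι) (x : ℕ → α) : Prop :=
  ∀ k, x (k + 1) = τ (t k) (x k)

/-- An index sequence is fair if every index occurs infinitely often in it. -/
def IsFair (t : ℕ → ι) : Prop :=
  ∀ i, ∃ᶠ k in atTop, t k = i

/-- The limits of the eventually constant traces from `b`, over all index sequences. -/
def traceLimits (τ : ι → α → α) (b : α) : Set α :=
  {l | ∃ (t : ℕ → ι) (x : ℕ → α), x 0 = b ∧ IsTrace τ t x ∧ ∀ᶠ k in atTop, x k = l}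

variable {τ : ι → α → α} {t : ℕ → ι} {x : ℕ → α}

theorem IsTrace.isFixedPt_of_frequently {i : ι} {l : α} (hx : IsTrace τ t x)
    (hi : ∃ᶠ k in atTop, t k = i) (hl : ∀ᶠ k in atTop, x k = l) : IsFixedPt (τ i) l := by
  have hl_succ : ∀ᶠ k in atTop, x (k + 1) = l := (tendsto_add_atTop_nat 1).eventually hl
  obtain ⟨k, rfl, hk, hk_succ⟩ := (hi.and_eventually (hl.and hl_succ)).exists
  calc
    τ (t k) l = τ (t k) (x k) := by rw [hk]
    _ = x (k + 1) := (hx k).symm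
    _ = l := hk_succ

variable [Preorder α]

theorem IsTrace.antitone (hx : IsTrace τ t x) (hdef : ∀ i a, τ i a ≤ a) : Antitone x :=
  antitone_nat_of_succ_le fun k => (hx k).trans_le (hdef (t k) (x k))

theorem IsTrace.le_of_forall_le_apply {p : α} (hx : IsTrace τ t x) (hmono : ∀ i, Monotone (τ i))
    (hp : ∀ i, p ≤ τ i p) (hp_zero : p ≤ x 0) (k : ℕ) : p ≤ x k := by
  induction k with
  | zero => exact hp_zero
  | succ k ih =>
    calc
      p ≤ τ (t k) p := hp (t k)
      _ ≤ τ (t k) (x k) := hmono (t k) ih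
      _ = x (k + 1) := (hx k).symm

theorem mem_lowerBounds_traceLimits {b p : α} (hmono : ∀ i, Monotone (τ i))
    (hp : ∀ i, p ≤ τ i p) (hpb : p ≤ b) : p ∈ lowerBounds (traceLimits τ b) := by
  rintro l ⟨t, x, rfl, hx, hl⟩
  obtain ⟨k, rfl⟩ := hl.exists
  exact hx.le_of_forall_le_apply hmono hp hpb k

theorem stmt_4_general {b l : α} (hmono : ∀ i, Monotone (τ i)) (hdef : ∀ i a, τ i a ≤ a)
    (ht : IsFair t) (hx_zero : x 0 = b) (hx : IsTrace τ t x) (hl : ∀ᶠ k in atTop, x k = l) :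
    IsLeast (traceLimits τ b) l := by
  have hfix (i : ι) : IsFixedPt (τ i) l := hx.isFixedPt_of_frequently (ht i) hl
  have hlb : l ≤ b := by
    obtain ⟨k, rfl⟩ := hl.exists
    exact hx_zero ▸ hx.antitone hdef (Nat.zero_le k)
  exact ⟨⟨t, x, hx_zero, hx, hl⟩, mem_lowerBounds_traceLimits hmono (fun i => (hfix i).ge) hlb⟩

end Trace

/-- In a finite complete lattice, the eventual value of any fair trace is below
the eventual value of any trace from the same starting element, and hence the
greatest lower bound of the eventual values of all traces is the eventual
value of the fair trace. -/
theorem stmt_4 {L ι : Type*} [CompleteLattice L] [Fintype L] [Fintype ι] [Nonempty ι]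
    (τ : ι → L → L) (hmono : ∀ i, Monotone (τ i)) (hdef : ∀ i x, τ i x ≤ x)
    (b : L)
    (tf : ℕ → ι) (hfair : ∀ i : ι, ∀ N : ℕ, ∃ k ≥ N, tf k = i)
    (xf : ℕ → L) (hxf0 : xf 0 = b) (hxfs : ∀ k, xf (k + 1) = τ (tf k) (xf k))
    (lf : L) (hlf : ∃ N, ∀ k ≥ N, xf k = lf) :
    (∀ (t : ℕ → ι) (x : ℕ → L) (l : L),
        x 0 = b → (∀ k, x (k + 1) = τ (t k) (x k)) →
        (∃ N, ∀ k ≥ N, x k = l) → lf ≤ l) ∧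
    lf = sInf {l | ∃ (t : ℕ → ι) (x : ℕ → L),
        x 0 = b ∧ (∀ k, x (k + 1) = τ (t k) (x k)) ∧ ∃ N, ∀ k ≥ N, x k = l} := by
  have hleast := stmt_4_general hmono hdef (fun i => frequently_atTop.2 (hfair i)) hxf0 hxfs
    (eventually_atTop.2 hlf)
  simp only [traceLimits, eventually_atTop] at hleast
  exact ⟨fun t x l h0 hs hl => hleast.2 ⟨t, x, h0, hs, hl⟩, hleast.isGLB.sInf_eq.symm⟩
end

section
/- Let an interval constraint system on ℝⁿ be given, let B = Set.pi Set.univ I be a box, and let s be a solution of the system with s ∈ B. Then for every coordinate i and every convex set J ⊆ ℝ with s i ∈ J, the system is non-failed below the box Set.pi Set.univ (Function.update I i J). In particular, every convex set containing the i-th component of a solution in B is an i-th pseudo-solution of the system. -/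
/-- A box in `ℝⁿ`: a product of convex subsets of `ℝ`. -/
def IsBox {n : ℕ} (B : Set (Fin n → ℝ)) : Prop :=
  ∃ I : Fin n → Set ℝ, (∀ j, Convex ℝ (I j)) ∧ B = Set.pi Set.univ I

/-- The contraction operator of a relation `r ⊆ ℝⁿ`. -/
def contractOp {n : ℕ} (r : Set (Fin n → ℝ)) (B : Set (Fin n → ℝ)) :
    Set (Fin n → ℝ) :=
  Set.pi Set.univ fun j => convexHull ℝ ((fun x => x j) '' (r ∩ B))

/-- Failure of an interval constraint system below a box. -/
def Failed {n m : ℕ} (r : Fin m → Set (Fin n → ℝ)) (B : Set (Fin n → ℝ)) : Prop :=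
  ∀ C : Set (Fin n → ℝ), IsBox C → C ⊆ B →
    (∀ i, contractOp (r i) C = C) → C = ∅

theorem mem_univ_pi_update_iff {ι : Type*} [DecidableEq ι] {α : ι → Type*}
    {I : ∀ j, Set (α j)} {s : ∀ j, α j} {i : ι} {J : Set (α i)} :
    s ∈ Set.pi Set.univ (Function.update I i J) ↔ s i ∈ J ∧ ∀ j ≠ i, s j ∈ I j :=
  Set.mem_univ_pi.trans <| Function.forall_update_iff I fun j K => s j ∈ K

theorem isBox_singleton {n : ℕ} (s : Fin n → ℝ) : IsBox {s} :=
  ⟨fun j => {s j}, fun j => convex_singleton (s j), (Set.univ_pi_singleton s).symm⟩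

theorem contractOp_singleton {n : ℕ} {r : Set (Fin n → ℝ)} {s : Fin n → ℝ} (hs : s ∈ r) :
    contractOp r {s} = {s} := by
  have inter_eq : r ∩ {s} = {s} := Set.inter_eq_right.mpr (Set.singleton_subset_iff.mpr hs)
  simp only [contractOp, inter_eq, Set.image_singleton, convexHull_singleton,
    Set.univ_pi_singleton]

theorem stmt_16_general {n m : ℕ} {r : Fin m → Set (Fin n → ℝ)} {B : Set (Fin n → ℝ)}
    {s : Fin n → ℝ} (hsol : ∀ k, s ∈ r k) (hsB : s ∈ B) : ¬ Failed r B := by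
  intro hfailed
  have singleton_eq_empty : {s} = (∅ : Set (Fin n → ℝ)) :=
    hfailed {s} (isBox_singleton s) (Set.singleton_subset_iff.mpr hsB)
      fun k => contractOp_singleton (hsol k)
  exact Set.singleton_ne_empty s singleton_eq_empty

/-- Every convex set containing the `i`-th component of a solution in the box
is an `i`-th pseudo-solution: the system is non-failed below the box obtained
by replacing the `i`-th factor by that convex set. -/
theorem stmt_16 {n m : ℕ} (r : Fin m → Set (Fin n → ℝ))
    (I : Fin n → Set ℝ) (hI : ∀ j, Convex ℝ (I j))
    (s : Fin n → ℝ) (hsol : ∀ k, s ∈ r k)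
    (hsB : s ∈ Set.pi Set.univ I)
    (i : Fin n) (J : Set ℝ) (hJ : Convex ℝ J) (hsi : s i ∈ J) :
    ¬ Failed r (Set.pi Set.univ (Function.update I i J)) :=
  stmt_16_general hsol (mem_univ_pi_update_iff.mpr ⟨hsi, fun j _ => hsB j (Set.mem_univ j)⟩)
end
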